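/- arXiv:2001.01199 — 2 statements merged into one kernel-verified Lean document; each statement's English description precedes it below -/
import Mathlib

section
/- Let {X_k} be a Markov chain on a finite state space S with initial distribution q and irreducible transition probability matrix P, and let f : S → [a,b]. Then for every t > 0, Pr_q( |Σ_{k=1}^n ( f(X_k) − E_q[f(X_k)] )| ≥ t ) ≤ 2 exp( −t² / (2ν²) ), where ν² = (1/4) n (b−a)² HitT(P)². -/
/-!
The centred sum is handled through the Doob martingale of `∑ₖ f(Xₖ)`. With `m` terms left to be
collected, the conditional expectation of what remains, started from `x`, is
`potential P f m x = ∑_{j < m} (Pʲ f)(x)`. The oscillation of this function is at most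
`(b - a) * HitT P`: a chain started from `x` coincides in law, from the hitting time of `y` on, with
one started from `y`, so that each step before the hitting time costs at most `b - a`
(`potential_sub_le`). This needs the expected hitting times to be truly finite, because `hitExp`
passes through `ENNReal.toReal`; irreducibility gives geometric decay of the survival probabilities
(`exists_sum_survive_le`).

Hoeffding's lemma for each conditional law (`hoeffding_finite`) then bounds the moment generating
function of the sum, one step at a time (`mgf_le`), and Chernoff's bound concludes.
-/


open Finset

namespace MC

variable {S : Type*}

/-- `q` is a probability distribution on the finite state space `S`. -/
def IsProbVec [Fintype S] (q : S → ℝ) : Prop :=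
  (∀ x, 0 ≤ q x) ∧ ∑ x, q x = 1

/-- `P` is a transition probability matrix (row-stochastic). -/
def IsStochastic [Fintype S] (P : S → S → ℝ) : Prop :=
  (∀ x y, 0 ≤ P x y) ∧ ∀ x, ∑ y, P x y = 1

/-- `n`-step transition probabilities `Pⁿ(x,y)`. -/
def matPow [Fintype S] [DecidableEq S] (P : S → S → ℝ) : ℕ → S → S → ℝ
  | 0 => fun x y => if x = y then 1 else 0
  | n + 1 => fun x y => ∑ z, matPow P n x z * P z y

/-- `P` is irreducible: any state can reach any state. -/
def IsIrreducible [Fintype S] [DecidableEq S] (P : S → S → ℝ) : Prop :=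
  ∀ x y, ∃ n, 1 ≤ n ∧ 0 < matPow P n x y

/-- `survive P y n x = Pr(T_y > n | X_1 = x)`, where
`T_y = inf {n ≥ 0 : X_{n+1} = y}` is the hitting time of `y`. -/
def survive [Fintype S] [DecidableEq S] (P : S → S → ℝ) (y : S) : ℕ → S → ℝ
  | 0 => fun x => if x = y then 0 else 1
  | n + 1 => fun x => if x = y then 0 else ∑ z, P x z * survive P y n z

/-- The expected hitting time `E[T_y | X_1 = x] = ∑_{n ≥ 0} Pr(T_y > n | X_1 = x)`. -/
noncomputable def hitExp [Fintype S] [DecidableEq S] (P : S → S → ℝ) (x y : S) : ℝ :=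
  (∑' n, ENNReal.ofReal (survive P y n x)).toReal

/-- The maximum expected hitting time `HitT(P) = max_{x,y} E[T_y | X_1 = x]`. -/
noncomputable def HitT [Fintype S] [DecidableEq S] (P : S → S → ℝ) : ℝ :=
  ⨆ x, ⨆ y, hitExp P x y

/-- The probability of the cylinder set given by the path `ω = (X_1, …, X_{n+1})`
for the chain with initial distribution `q` and transition matrix `P`. -/
noncomputable def pathProb [Fintype S] (q : S → ℝ) (P : S → S → ℝ) {n : ℕ}
    (ω : Fin (n + 1) → S) : ℝ :=
  q (ω 0) * ∏ i : Fin n, P (ω i.castSucc) (ω i.succ)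

/-- `Pr_q(A)` for an event `A` determined by the first `n+1` states `(X_1, …, X_{n+1})`. -/
noncomputable def chainProb [Fintype S] (q : S → ℝ) (P : S → S → ℝ) (n : ℕ)
    (A : Set (Fin (n + 1) → S)) : ℝ :=
  ∑ ω : Fin (n + 1) → S, A.indicator (pathProb q P) ω

/-- `stepDist q P k` is the distribution of `X_{k+1}` when `X_1 ∼ q`. -/
def stepDist [Fintype S] (q : S → ℝ) (P : S → S → ℝ) : ℕ → S → ℝ
  | 0 => q
  | k + 1 => fun y => ∑ x, stepDist q P k x * P x y

end MC

namespace MC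

/-! ### Finiteness of the expected hitting times -/

section Survival

variable {S : Type*} [Fintype S] [DecidableEq S] {P : S → S → ℝ}

lemma survive_self (y : S) (n : ℕ) : survive P y n y = 0 := by
  cases n <;> simp [survive]

lemma survive_nonneg (hP : IsStochastic P) (y : S) (n : ℕ) (x : S) : 0 ≤ survive P y n x := by
  induction n generalizing x with
  | zero => simp only [survive]; split_ifs <;> norm_num
  | succ n ih =>
    simp only [survive]
    split_ifs
    · exact le_rfl
    · exact sum_nonneg fun z _ => mul_nonneg (hP.1 x z) (ih z)

/-- The right-multiplication recursion defining `matPow` agrees with left multiplication. -/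
lemma matPow_succ_left (n : ℕ) (x y : S) :
    matPow P (n + 1) x y = ∑ z, P x z * matPow P n z y := by
  induction n generalizing y with
  | zero => simp [matPow]
  | succ n ih =>
    rw [matPow]
    simp_rw [ih, matPow, sum_mul, mul_sum, mul_assoc]
    exact sum_comm

lemma matPow_nonneg (hP : IsStochastic P) (n : ℕ) (x y : S) : 0 ≤ matPow P n x y := by
  induction n generalizing y with
  | zero => simp only [matPow]; split_ifs <;> norm_num
  | succ n ih => exact sum_nonneg fun z _ => mul_nonneg (ih z) (hP.1 z y)

lemma matPow_le_one (hP : IsStochastic P) (n : ℕ) (x y : S) : matPow P n x y ≤ 1 := by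
  induction n generalizing x with
  | zero => simp only [matPow]; split_ifs <;> norm_num
  | succ n ih =>
    rw [matPow_succ_left, ← hP.2 x]
    exact sum_le_sum fun z _ => mul_le_of_le_one_right (hP.1 x z) (ih z)

/-- Being at `y` after `n` steps excludes that `y` has not been visited up to then. -/
lemma survive_add_matPow_le (hP : IsStochastic P) (y : S) (n : ℕ) (x : S) :
    survive P y n x + matPow P n x y ≤ 1 := by
  induction n generalizing x with
  | zero => simp only [survive, matPow]; split_ifs <;> norm_num
  | succ n ih =>
    by_cases h : x = y
    · subst h
      rw [survive_self, zero_add]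
      exact matPow_le_one hP _ _ _
    · simp only [survive, if_neg h]
      rw [matPow_succ_left, ← sum_add_distrib, ← hP.2 x]
      refine sum_le_sum fun z _ => ?_
      rw [← mul_add]
      exact mul_le_of_le_one_right (hP.1 x z) (ih z)

/-- Markov property: a uniform bound on surviving `n` steps can be applied after `k` steps. -/
lemma survive_add_le (hP : IsStochastic P) (y : S) {n : ℕ} {c : ℝ}
    (hc : ∀ x, survive P y n x ≤ c) (k : ℕ) (x : S) :
    survive P y (k + n) x ≤ c * survive P y k x := by
  induction k generalizing x with
  | zero =>
    by_cases h : x = y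
    · subst h; simp [survive_self]
    · simpa [survive, h] using hc x
  | succ k ih =>
    rw [Nat.add_right_comm]
    by_cases h : x = y
    · subst h; simp [survive_self]
    · simp only [survive, if_neg h, mul_sum]
      refine sum_le_sum fun z _ => ?_
      calc P x z * survive P y (k + n) z ≤ P x z * (c * survive P y k z) :=
            mul_le_mul_of_nonneg_left (ih z) (hP.1 x z)
        _ = _ := by ring

lemma survive_le_one (hP : IsStochastic P) (y : S) (n : ℕ) (x : S) : survive P y n x ≤ 1 := by
  linarith [survive_add_matPow_le hP y n x, matPow_nonneg hP n x y]

lemma survive_antitone (hP : IsStochastic P) (y x : S) : Antitone fun n => survive P y n x := by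
  intro m n hmn
  have := survive_add_le hP y (fun x => survive_le_one hP y (n - m) x) m x
  rwa [Nat.add_sub_cancel' hmn, one_mul] at this

/-- By irreducibility, the probability of avoiding `y` for `N` steps is at most some `c < 1`
uniformly in the starting point, for a suitable `N`. -/
lemma exists_survive_le (hP : IsStochastic P) (hirr : IsIrreducible P) (y : S) :
    ∃ N : ℕ, ∃ c < 1, ∀ x, survive P y N x ≤ c := by
  have : Nonempty S := ⟨y⟩
  choose N _ hN using fun x => hirr x y
  refine ⟨univ.sup N, ?_⟩
  obtain ⟨x₀, hx₀⟩ := Finite.exists_max fun x => survive P y (univ.sup N) x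
  refine ⟨_, ?_, hx₀⟩
  have h1 := survive_antitone hP y x₀ (le_sup (f := N) (mem_univ x₀))
  have h2 := survive_add_matPow_le hP y (N x₀) x₀
  have h3 := hN x₀
  simp only at h1
  linarith

/-- The truncated expected hitting times are bounded: with `N` and `c < 1` as in
`exists_survive_le`, the partial sums `h` satisfy `h ≤ N + c * h`. -/
lemma exists_sum_survive_le (hP : IsStochastic P) (hirr : IsIrreducible P) (x y : S) :
    ∃ C, ∀ m, ∑ n ∈ range m, survive P y n x ≤ C := by
  obtain ⟨N, c, hc, hN⟩ := exists_survive_le hP hirr y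
  refine ⟨N / (1 - c), fun m => ?_⟩
  rw [le_div_iff₀ (by linarith)]
  have h1 : ∑ n ∈ range m, survive P y n x ≤ ∑ n ∈ range (N + m), survive P y n x :=
    sum_le_sum_of_subset_of_nonneg (range_subset_range.2 (by omega))
      fun n _ _ => survive_nonneg hP y n x
  rw [sum_range_add] at h1
  have h2 : ∑ n ∈ range N, survive P y n x ≤ N := by
    simpa using sum_le_sum fun n (_ : n ∈ range N) => survive_le_one hP y n x
  have h3 : ∑ n ∈ range m, survive P y (N + n) x ≤ c * ∑ n ∈ range m, survive P y n x := by
    rw [mul_sum]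
    refine sum_le_sum fun n _ => ?_
    rw [add_comm]
    exact survive_add_le hP y hN n x
  linarith

lemma sum_survive_le_hitExp (hP : IsStochastic P) (hirr : IsIrreducible P) (x y : S) (m : ℕ) :
    ∑ n ∈ range m, survive P y n x ≤ hitExp P x y := by
  obtain ⟨C, hC⟩ := exists_sum_survive_le hP hirr x y
  have hs : Summable fun n => survive P y n x :=
    summable_of_sum_range_le (fun n => survive_nonneg hP y n x) hC
  rw [hitExp, ← ENNReal.ofReal_tsum_of_nonneg (fun n => survive_nonneg hP y n x) hs,
    ENNReal.toReal_ofReal (tsum_nonneg fun n => survive_nonneg hP y n x)]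
  exact hs.sum_le_tsum _ fun n _ => survive_nonneg hP y n x

lemma hitExp_le_HitT (x y : S) : hitExp P x y ≤ HitT P :=
  (le_ciSup (Set.finite_range fun y => hitExp P x y).bddAbove y).trans
    (le_ciSup (Set.finite_range fun x => ⨆ y, hitExp P x y).bddAbove x)

end Survival

/-! ### Oscillation of the conditional expectations -/

section Potential

variable {S : Type*} [Fintype S] {P : S → S → ℝ} {f : S → ℝ} {a b : ℝ}

/-- `potential P f m x = E[f(X_1) + ⋯ + f(X_m) | X_1 = x]`. -/
def potential (P : S → S → ℝ) (f : S → ℝ) : ℕ → S → ℝ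
  | 0 => fun _ => 0
  | m + 1 => fun x => f x + ∑ z, P x z * potential P f m z

lemma potential_add_le (hP : IsStochastic P) (hf : ∀ x, f x ∈ Set.Icc a b) (m : ℕ) (x : S) :
    potential P f m x + a ≤ potential P f (m + 1) x := by
  induction m generalizing x with
  | zero => simpa [potential] using (hf x).1
  | succ m ih =>
    have h : ∑ z, P x z * (potential P f m z + a) ≤ ∑ z, P x z * potential P f (m + 1) z :=
      sum_le_sum fun z _ => mul_le_mul_of_nonneg_left (ih z) (hP.1 x z)
    simp only [mul_add, sum_add_distrib, ← sum_mul, hP.2 x] at h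
    rw [potential, potential]
    linarith

/-- Changing the starting point from `y` to `x` gains at most `b - a` for each of the steps made
before hitting `y`; the sum on the right is `E[min(T_y, m) | X_1 = x]`. -/
lemma potential_sub_le_sum_survive [DecidableEq S] (hP : IsStochastic P)
    (hf : ∀ x, f x ∈ Set.Icc a b) (m : ℕ) (x y : S) :
    potential P f m x ≤ potential P f m y + (b - a) * ∑ n ∈ range m, survive P y n x := by
  induction m generalizing x with
  | zero => simp [potential]
  | succ m ih =>
    by_cases h : x = y
    · subst h; simp [survive_self]
    · have h1 : ∑ z, P x z * potential P f m z ≤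
          ∑ z, P x z * (potential P f m y + (b - a) * ∑ n ∈ range m, survive P y n z) :=
        sum_le_sum fun z _ => mul_le_mul_of_nonneg_left (ih z) (hP.1 x z)
      have h2 : ∑ n ∈ range (m + 1), survive P y n x =
          (∑ z, P x z * ∑ n ∈ range m, survive P y n z) + 1 := by
        rw [sum_range_succ']
        simp only [survive, if_neg h, mul_sum]
        rw [sum_comm]
      simp only [mul_add, sum_add_distrib, ← sum_mul, hP.2 x, one_mul] at h1
      have h3 : ∑ z, P x z * ((b - a) * ∑ n ∈ range m, survive P y n z) =
          (b - a) * ∑ z, P x z * ∑ n ∈ range m, survive P y n z := by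
        rw [mul_sum]; exact sum_congr rfl fun z _ => by ring
      have h4 := potential_add_le hP hf m y
      have h5 := (hf x).2
      rw [h2, mul_add]
      rw [h3] at h1
      have h6 : potential P f (m + 1) x = f x + ∑ z, P x z * potential P f m z := rfl
      linarith

lemma potential_sub_le [DecidableEq S] (hP : IsStochastic P) (hirr : IsIrreducible P)
    (hf : ∀ x, f x ∈ Set.Icc a b) (m : ℕ) (x y : S) :
    potential P f m x ≤ potential P f m y + (b - a) * HitT P := by
  have hab : 0 ≤ b - a := by linarith [(hf x).1, (hf x).2]
  have h := mul_le_mul_of_nonneg_left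
    ((sum_survive_le_hitExp hP hirr x y m).trans (hitExp_le_HitT x y)) hab
  linarith [potential_sub_le_sum_survive hP hf m x y]

/-- Conditioning on the first step: the initial law is advanced by one transition. -/
lemma sum_stepDist_succ (q f : S → ℝ) (k : ℕ) :
    ∑ x, stepDist q P (k + 1) x * f x = ∑ x, stepDist (fun y => ∑ x, q x * P x y) P k x * f x := by
  have h : stepDist q P (k + 1) = stepDist (fun y => ∑ x, q x * P x y) P k := by
    induction k with
    | zero => rfl
    | succ k ih => funext y; rw [stepDist, ih]; rfl
  rw [h]

/-- The sum of the expectations `E_q[f(X_k)]` is the potential averaged over the initial law. -/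
lemma sum_stepDist (q : S → ℝ) (n : ℕ) :
    ∑ k ∈ range n, ∑ x, stepDist q P k x * f x = ∑ x, q x * potential P f n x := by
  induction n generalizing q with
  | zero => simp [potential]
  | succ n ih =>
    rw [sum_range_succ']
    simp_rw [sum_stepDist_succ]
    rw [ih]
    simp only [potential, stepDist, mul_add, sum_add_distrib, sum_mul, mul_sum]
    rw [add_comm, sum_comm]
    simp only [mul_assoc]

end Potential

/-! ### Moment generating function of the sum -/

section MomentGeneratingFunction

variable {S : Type*} [Fintype S] {P : S → S → ℝ} {f : S → ℝ}

open MeasureTheory ProbabilityTheory in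
/-- Hoeffding's lemma for a probability vector on a finite set and a function of oscillation at
most `R`. -/
lemma hoeffding_finite {p V : S → ℝ} (hp : IsProbVec p) {R : ℝ}
    (hV : ∀ x y, V x ≤ V y + R) (l : ℝ) :
    ∑ x, p x * Real.exp (l * V x) ≤ Real.exp (l * ∑ x, p x * V x + l ^ 2 * R ^ 2 / 8) := by
  have hne : Nonempty S := by
    by_contra h
    rw [not_nonempty_iff] at h
    simpa using hp.2
  let _ : MeasurableSpace S := ⊤
  let μ : PMF S := PMF.ofFintype (fun x => ENNReal.ofReal (p x)) (by
    rw [← ENNReal.ofReal_sum_of_nonneg fun x _ => hp.1 x, hp.2, ENNReal.ofReal_one])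
  have hint : ∀ g : S → ℝ, ∫ x, g x ∂μ.toMeasure = ∑ x, p x * g x := by
    intro g
    rw [PMF.integral_eq_sum]
    exact sum_congr rfl fun x _ => by simp [μ, ENNReal.toReal_ofReal (hp.1 x)]
  obtain ⟨x₀, hx₀⟩ := Finite.exists_min V
  have hsub := hasSubgaussianMGF_of_mem_Icc (μ := μ.toMeasure) (X := V)
    (measurable_of_finite V).aemeasurable (a := V x₀) (b := V x₀ + R)
    (Filter.Eventually.of_forall fun x => ⟨hx₀ x, hV x x₀⟩)
  have h := hsub.mgf_le l
  simp only [mgf, hint] at h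
  have e1 : ∑ x, p x * Real.exp (l * V x) = Real.exp (l * ∑ x, p x * V x) *
      ∑ x, p x * Real.exp (l * (V x - ∑ x, p x * V x)) := by
    rw [mul_sum]
    refine sum_congr rfl fun x _ => ?_
    rw [mul_left_comm, ← Real.exp_add]
    ring_nf
  rw [e1, Real.exp_add]
  refine mul_le_mul_of_nonneg_left (h.trans (le_of_eq ?_)) (Real.exp_pos _).le
  congr 1
  simp only [add_sub_cancel_left, NNReal.coe_pow, NNReal.coe_div, coe_nnnorm, Real.norm_eq_abs,
    NNReal.coe_ofNat, div_pow, sq_abs]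
  ring

/-- `pathMgf P f l m x = E[exp (l * (f(X_1) + ⋯ + f(X_m))) | X_1 = x]`. -/
noncomputable def pathMgf (P : S → S → ℝ) (f : S → ℝ) (l : ℝ) : ℕ → S → ℝ
  | 0 => fun _ => 1
  | m + 1 => fun x => Real.exp (l * f x) * ∑ z, P x z * pathMgf P f l m z

/-- Under `E_q` the exponential moment of the path functional is the average of `pathMgf`: paths
are summed by splitting off the first state and starting afresh from the law `P x`. -/
lemma sum_pathProb_mul_exp (q : S → ℝ) (n : ℕ) (l : ℝ) :
    ∑ ω : Fin (n + 1) → S, pathProb q P ω * Real.exp (l * ∑ k : Fin n, f (ω k.castSucc)) =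
      ∑ x, q x * pathMgf P f l n x := by
  induction n generalizing q with
  | zero =>
    rw [← (Equiv.funUnique (Fin 1) S).symm.sum_comp]
    simp [pathProb, pathMgf]
  | succ n ih =>
    rw [← (Fin.consEquiv fun _ => S).sum_comp, Fintype.sum_prod_type]
    refine sum_congr rfl fun x _ => ?_
    simp only [pathMgf]
    rw [← ih (P x), mul_sum, mul_sum]
    refine sum_congr rfl fun ω _ => ?_
    simp only [pathProb, Fin.consEquiv_apply, Fin.prod_univ_succ (n := n),
      Fin.sum_univ_succ (n := n), Fin.castSucc_zero, Fin.cons_zero, Fin.cons_succ,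
      ← Fin.succ_castSucc, mul_add, Real.exp_add]
    ring

/-- One application of Hoeffding's lemma for the law of each of the states `X_1, …, X_m`. -/
lemma mgf_le (hP : IsStochastic P) {R : ℝ}
    (hR : ∀ m x y, potential P f m x ≤ potential P f m y + R) (l : ℝ) (m : ℕ)
    {q : S → ℝ} (hq : IsProbVec q) :
    ∑ x, q x * pathMgf P f l m x ≤
      Real.exp (l * ∑ x, q x * potential P f m x + m * (l ^ 2 * R ^ 2 / 8)) := by
  induction m generalizing q with
  | zero => simp [pathMgf, potential, hq.2]
  | succ m ih =>
    have h1 : ∀ x, pathMgf P f l (m + 1) x ≤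
        Real.exp (l * potential P f (m + 1) x) * Real.exp (m * (l ^ 2 * R ^ 2 / 8)) := by
      intro x
      calc pathMgf P f l (m + 1) x
          ≤ Real.exp (l * f x) * Real.exp (l * ∑ z, P x z * potential P f m z
              + m * (l ^ 2 * R ^ 2 / 8)) :=
            mul_le_mul_of_nonneg_left (ih ⟨hP.1 x, hP.2 x⟩) (Real.exp_pos _).le
        _ = _ := by
            rw [← Real.exp_add, ← Real.exp_add, potential]
            ring_nf
    calc ∑ x, q x * pathMgf P f l (m + 1) x
        ≤ ∑ x, q x * (Real.exp (l * potential P f (m + 1) x) *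
            Real.exp (m * (l ^ 2 * R ^ 2 / 8))) :=
          sum_le_sum fun x _ => mul_le_mul_of_nonneg_left (h1 x) (hq.1 x)
      _ = (∑ x, q x * Real.exp (l * potential P f (m + 1) x)) *
            Real.exp (m * (l ^ 2 * R ^ 2 / 8)) := by
          rw [sum_mul]; exact sum_congr rfl fun x _ => by ring
      _ ≤ Real.exp (l * ∑ x, q x * potential P f (m + 1) x + l ^ 2 * R ^ 2 / 8) *
            Real.exp (m * (l ^ 2 * R ^ 2 / 8)) :=
          mul_le_mul_of_nonneg_right (hoeffding_finite hq (hR (m + 1)) l) (Real.exp_pos _).le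
      _ = _ := by
          rw [← Real.exp_add]
          push_cast
          ring_nf

/-- Sub-Gaussian bound for the centred sum. -/
lemma centred_mgf_le (hP : IsStochastic P) {R : ℝ}
    (hR : ∀ m x y, potential P f m x ≤ potential P f m y + R) (l : ℝ) (n : ℕ)
    {q : S → ℝ} (hq : IsProbVec q) :
    ∑ ω : Fin (n + 1) → S, pathProb q P ω * Real.exp
      (l * ∑ k : Fin n, (f (ω k.castSucc) - ∑ x, stepDist q P (k : ℕ) x * f x)) ≤
      Real.exp (n * (l ^ 2 * R ^ 2 / 8)) := by
  have hE : ∑ k : Fin n, ∑ x, stepDist q P (k : ℕ) x * f x = ∑ x, q x * potential P f n x := by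
    rw [Fin.sum_univ_eq_sum_range (fun k => ∑ x, stepDist q P k x * f x), sum_stepDist]
  simp only [sum_sub_distrib, hE, mul_sub, Real.exp_sub, ← mul_div_assoc, ← sum_div]
  rw [sum_pathProb_mul_exp, div_le_iff₀ (Real.exp_pos _), ← Real.exp_add, add_comm]
  exact (mgf_le hP hR l n hq).trans_eq (by ring_nf)

end MomentGeneratingFunction

end MC

open MC in
/-- **Hoeffding inequality for irreducible finite Markov chains** (Theorem 1).
For a Markov chain `X_1, X_2, …` on a finite state space `S` with initial
distribution `q` and irreducible transition matrix `P`, and `f : S → [a,b]`,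
for every `t > 0`,
`Pr_q(|∑_{k=1}^n (f(X_k) − E_q[f(X_k)])| ≥ t) ≤ 2 exp(−t² / (2ν²))`,
where `ν² = (1/4) n (b−a)² HitT(P)²`. -/
theorem markov_hoeffding {S : Type*} [Fintype S] [DecidableEq S]
    (P : S → S → ℝ) (hP : IsStochastic P) (hirr : IsIrreducible P)
    (q : S → ℝ) (hq : IsProbVec q)
    (f : S → ℝ) (a b : ℝ) (hf : ∀ x, f x ∈ Set.Icc a b)
    (n : ℕ) (t : ℝ) (ht : 0 < t) :
    chainProb q P n
      {ω | t ≤ |∑ k : Fin n, (f (ω k.castSucc) - ∑ x, stepDist q P (k : ℕ) x * f x)|} ≤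
      2 * Real.exp (-t ^ 2 / (2 * (1 / 4 * n * (b - a) ^ 2 * HitT P ^ 2))) := by
  have hmgf := fun l => centred_mgf_le hP (potential_sub_le hP hirr hf) l n hq
  set Y : (Fin (n + 1) → S) → ℝ :=
    fun ω => ∑ k : Fin n, (f (ω k.castSucc) - ∑ x, stepDist q P (k : ℕ) x * f x) with hY
  set D : ℝ := n * ((b - a) * HitT P) ^ 2 with hD
  have hD0 : 0 ≤ D := by positivity
  -- The minimizer of `l ↦ l ^ 2 * D / 8 - l * t`. When `D = 0` it is `0` by the convention for
  -- division, and the claimed bound is `2`, so that case needs no separate treatment.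
  set l : ℝ := 4 * t / D with hl
  have hl0 : 0 ≤ l := by positivity
  have hpos : ∀ ω : Fin (n + 1) → S, 0 ≤ pathProb q P ω := fun ω =>
    mul_nonneg (hq.1 _) (prod_nonneg fun i _ => hP.1 _ _)
  have hpt : ∀ ω, Set.indicator {ω | t ≤ |Y ω|} (pathProb q P) ω ≤
      Real.exp (-(l * t)) *
        (pathProb q P ω * Real.exp (l * Y ω) + pathProb q P ω * Real.exp (-l * Y ω)) := by
    intro ω
    by_cases h : t ≤ |Y ω|
    · rw [Set.indicator_of_mem (by exact h)]
      have h1 : 1 ≤ Real.exp (-(l * t)) * (Real.exp (l * Y ω) + Real.exp (-l * Y ω)) := by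
        rw [mul_add, ← Real.exp_add, ← Real.exp_add]
        rcases le_abs.1 h with h | h
        · have := Real.one_le_exp (x := -(l * t) + l * Y ω) (by nlinarith)
          linarith [Real.exp_pos (-(l * t) + -l * Y ω)]
        · have := Real.one_le_exp (x := -(l * t) + -l * Y ω) (by nlinarith)
          linarith [Real.exp_pos (-(l * t) + l * Y ω)]
      calc pathProb q P ω ≤ pathProb q P ω *
            (Real.exp (-(l * t)) * (Real.exp (l * Y ω) + Real.exp (-l * Y ω))) :=
            le_mul_of_one_le_right (hpos ω) h1
        _ = _ := by ring
    · rw [Set.indicator_of_notMem (by exact h)]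
      have := hpos ω
      positivity
  have hexp : -(l * t) + l ^ 2 * D / 8 =
      -t ^ 2 / (2 * (1 / 4 * n * (b - a) ^ 2 * HitT P ^ 2)) := by
    rw [show 2 * (1 / 4 * n * (b - a) ^ 2 * HitT P ^ 2) = D / 2 by rw [hD]; ring, hl]
    rcases eq_or_ne D 0 with h | h
    · simp [h]
    · field_simp
      ring
  calc chainProb q P n {ω | t ≤ |Y ω|}
      ≤ ∑ ω, Real.exp (-(l * t)) *
        (pathProb q P ω * Real.exp (l * Y ω) + pathProb q P ω * Real.exp (-l * Y ω)) :=
        sum_le_sum fun ω _ => hpt ω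
    _ = Real.exp (-(l * t)) * (∑ ω, pathProb q P ω * Real.exp (l * Y ω) +
          ∑ ω, pathProb q P ω * Real.exp (-l * Y ω)) := by
        rw [← mul_sum, sum_add_distrib]
    _ ≤ Real.exp (-(l * t)) * (Real.exp (l ^ 2 * D / 8) + Real.exp (l ^ 2 * D / 8)) := by
        refine mul_le_mul_of_nonneg_left (add_le_add ?_ ?_) (Real.exp_pos _).le
        · refine (hmgf l).trans (le_of_eq ?_)
          rw [hD]; ring_nf
        · refine (hmgf (-l)).trans (le_of_eq ?_)
          rw [hD]; ring_nf
    _ = _ := by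
        rw [← hexp, Real.exp_add]
        ring
end

section
/- Let {X_k} be a Markov chain on a finite state space S with initial distribution q and irreducible transition probability matrix P, let f : S → [a,b], and set S_{1,n} = Σ_{k=1}^n f(X_k). Let F_0 be the trivial σ-field and F_k = σ(X_1,…,X_k), and let Δ_k = E(S_{1,n} | F_k) − E(S_{1,n} | F_{k−1}) be the Doob martingale differences. Then for every k = 1,…,n and every θ ∈ ℝ, E( e^{θ Δ_k} | F_{k−1} ) ≤ exp( θ² (b−a)² HitT(P)² / 8 ) almost surely. -/
/-!
For `m = n - k + 1`, let `g_m x` be the expected sum of `f` over `m` consecutive states started from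
`x` (`futureSum`). By the Markov property
`Δ_k = g_m (X_k) - ∑ z, p z * g_m z`, where `p` is the conditional law of `X_k` given `F_{k-1}`
(`nextLaw`). Hence, conditionally on `F_{k-1}`, `Δ_k` is a centred variable whose range is no longer
than the oscillation of `g_m`, and Hoeffding's lemma applies.

The oscillation of `g_m` is at most `(b - a) * HitT P` (`futureSum_osc`): running the chain from `x`
until it meets `y` gains at most `b - a` per step relative to the minimal reward `a`, and what
remains from `y` is a sum over at most `m` steps. That the expected hitting times are finite, so that
`HitT P` really dominates them, follows from irreducibility: some `N` has `survive P y N ≤ r < 1` at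
every state, and then the maximal truncated hitting time `M` satisfies `M ≤ N + r * M`.

The Markov property is the identity `sum_pathProb_eq` for sums over paths, proved by removing the
last state of the path. It identifies the conditional expectations in `condExp_next`, and a downward
induction with the tower property gives `E(S_{1,n} | F_k)` in `condExp_total`.
-/

open Finset

namespace MC

/-- The path space `(X_1, …, X_{m})` of a finite-state chain carries the discrete
σ-algebra as ambient measurable structure. -/
instance pathMeasurableSpace {S : Type*} {m : ℕ} : MeasurableSpace (Fin m → S) := ⊤

/-- The law `Pr_q` of `(X_1, …, X_{n+1})` as a measure on the path space. -/
noncomputable def pathMeasure {S : Type*} [Fintype S] (q : S → ℝ) (P : S → S → ℝ)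
    (n : ℕ) : MeasureTheory.Measure (Fin (n + 1) → S) :=
  ∑ ω : Fin (n + 1) → S, ENNReal.ofReal (pathProb q P ω) • MeasureTheory.Measure.dirac ω

/-- The natural filtration: `pastF S n k = F_k = σ(X_1, …, X_k)` on the path space of
`(X_1, …, X_{n+1})` (for `k ≤ n + 1`; `F_0` is the trivial σ-algebra). -/
def pastF (S : Type*) (n k : ℕ) : MeasurableSpace (Fin (n + 1) → S) :=
  MeasurableSpace.comap
    (fun ω (i : Fin (min k (n + 1))) => ω (Fin.castLE (min_le_right _ _) i)) ⊤

end MC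

namespace MC

section HittingTimes

/-! ### Hitting times -/

variable {S : Type*} [Fintype S] [DecidableEq S] {P : S → S → ℝ}

lemma survive_succ {x y : S} (n : ℕ) (hxy : x ≠ y) :
    survive P y (n + 1) x = ∑ z, P x z * survive P y n z := by
  simp only [survive, if_neg hxy]

lemma survive_succ_le (hP : IsStochastic P) (y : S) (n : ℕ) (x : S) :
    survive P y (n + 1) x ≤ survive P y n x := by
  induction n generalizing x with
  | zero =>
    simp only [survive]
    split_ifs
    · exact le_rfl
    · refine le_of_le_of_eq (Finset.sum_le_sum fun z _ => ?_) (hP.2 x)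
      have := hP.1 x z
      split_ifs <;> simp [this]
  | succ n ih =>
    by_cases hxy : x = y
    · subst hxy; simp [survive_self]
    · rw [survive_succ n hxy, survive_succ (n + 1) hxy]
      exact Finset.sum_le_sum fun z _ => mul_le_mul_of_nonneg_left (ih z) (hP.1 x z)

/-- The Markov property at time `N`: on `{T_y > N}`, the expected truncated time still to wait for
`y` is at most the maximal one. -/
lemma sum_survive_shift_le (hP : IsStochastic P) (y : S) (m : ℕ) (C : ℝ)
    (hC : ∀ x, ∑ j ∈ range m, survive P y j x ≤ C) (N : ℕ) (x : S) :
    ∑ j ∈ range m, survive P y (N + j) x ≤ C * survive P y N x := by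
  induction N generalizing x with
  | zero =>
    by_cases hxy : x = y
    · subst hxy; simp [survive_self]
    · simpa [survive, hxy] using hC x
  | succ N ih =>
    by_cases hxy : x = y
    · subst hxy; simp [survive_self]
    · have : ∀ j, N + 1 + j = (N + j) + 1 := fun j => by omega
      simp_rw [this, survive_succ _ hxy]
      rw [Finset.sum_comm, Finset.mul_sum]
      refine Finset.sum_le_sum fun z _ => ?_
      rw [← Finset.mul_sum, mul_left_comm]
      exact mul_le_mul_of_nonneg_left (ih z) (hP.1 x z)

/-- The expected hitting times of `y` are finite. -/
lemma exists_sum_survive_bound (hP : IsStochastic P) (hirr : IsIrreducible P) (y : S) :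
    ∃ B : ℝ, ∀ m x, ∑ j ∈ range m, survive P y j x ≤ B := by
  have : Nonempty S := ⟨y⟩
  choose t _ ht using fun x => hirr x y
  obtain ⟨N, hN⟩ : ∃ N, ∀ x, t x ≤ N :=
    ⟨univ.sup t, fun x => Finset.le_sup (f := t) (mem_univ x)⟩
  have hlt : ∀ x, survive P y N x < 1 := fun x => by
    have h1 := survive_antitone hP y x (hN x)
    have h2 := survive_add_matPow_le hP y (t x) x
    have h3 := ht x
    simp only at h1
    linarith
  obtain ⟨x₀, hx₀⟩ := Finite.exists_max fun x => survive P y N x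
  have hr := hlt x₀
  refine ⟨N / (1 - survive P y N x₀), fun m x => ?_⟩
  obtain ⟨x₁, hx₁⟩ := Finite.exists_max fun x => ∑ j ∈ range m, survive P y j x
  refine (hx₁ x).trans ?_
  set M := ∑ j ∈ range m, survive P y j x₁ with hM
  have hM0 : 0 ≤ M := Finset.sum_nonneg fun j _ => survive_nonneg hP y j x₁
  have h1 : M ≤ ∑ j ∈ range (N + m), survive P y j x₁ :=
    Finset.sum_le_sum_of_subset_of_nonneg (Finset.range_mono (Nat.le_add_left m N))
      fun j _ _ => survive_nonneg hP y j x₁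
  rw [Finset.sum_range_add] at h1
  have h2 : ∑ j ∈ range N, survive P y j x₁ ≤ N := by
    calc _ ≤ ∑ j ∈ range N, (1 : ℝ) := Finset.sum_le_sum fun j _ => survive_le_one hP y j x₁
      _ = N := by simp
  have h3 := sum_survive_shift_le hP y m M hx₁ N x₁
  have h4 : M * survive P y N x₁ ≤ M * survive P y N x₀ :=
    mul_le_mul_of_nonneg_left (hx₀ x₁) hM0
  rw [le_div_iff₀ (by linarith)]
  linarith

lemma sum_survive_le_HitT (hP : IsStochastic P) (hirr : IsIrreducible P) (m : ℕ) (x y : S) :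
    ∑ j ∈ range m, survive P y j x ≤ HitT P := by
  obtain ⟨B, hB⟩ := exists_sum_survive_bound hP hirr y
  have hsum : ∀ m, ∑ j ∈ range m, ENNReal.ofReal (survive P y j x)
      = ENNReal.ofReal (∑ j ∈ range m, survive P y j x) := fun m =>
    (ENNReal.ofReal_sum_of_nonneg fun j _ => survive_nonneg hP y j x).symm
  have hfin : ∑' n, ENNReal.ofReal (survive P y n x) ≠ ⊤ := by
    refine ne_top_of_le_ne_top (ENNReal.ofReal_ne_top (r := B)) ?_
    rw [ENNReal.tsum_eq_iSup_nat]
    refine iSup_le fun m => ?_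
    rw [hsum]
    exact ENNReal.ofReal_le_ofReal (hB m x)
  have h1 : ∑ j ∈ range m, survive P y j x ≤ hitExp P x y := by
    rw [hitExp, ← ENNReal.ofReal_le_iff_le_toReal hfin, ← hsum]
    exact ENNReal.sum_le_tsum _
  refine h1.trans ((le_ciSup (f := fun y => hitExp P x y) (Set.finite_range _).bddAbove y).trans ?_)
  exact le_ciSup (f := fun x => ⨆ y, hitExp P x y) (Set.finite_range _).bddAbove x

/-- `futureSum P f m x` is `E(f(X_1) + ⋯ + f(X_m) | X_1 = x)`. -/
def futureSum (P : S → S → ℝ) (f : S → ℝ) : ℕ → S → ℝ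
  | 0 => fun _ => 0
  | m + 1 => fun x => f x + ∑ z, P x z * futureSum P f m z

/-- A coupling-free comparison of two starting points: a chain from `x` gains at most `b - a` over
one from `y` at each step before it hits `y`. -/
lemma futureSum_osc (hP : IsStochastic P) (hirr : IsIrreducible P) {f : S → ℝ} {a b : ℝ}
    (hf : ∀ x, f x ∈ Set.Icc a b) (m : ℕ) (x y : S) :
    futureSum P f m x ≤ futureSum P f m y + (b - a) * HitT P := by
  have hlow : ∀ m x, futureSum P f m x + a ≤ futureSum P f (m + 1) x := by
    intro m
    induction m with
    | zero => intro x; simpa [futureSum] using (hf x).1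
    | succ m ih =>
      intro x
      have : ∑ z, P x z * (futureSum P f m z + a) ≤ ∑ z, P x z * futureSum P f (m + 1) z :=
        Finset.sum_le_sum fun z _ => mul_le_mul_of_nonneg_left (ih z) (hP.1 x z)
      simp_rw [mul_add, Finset.sum_add_distrib, ← Finset.sum_mul, hP.2 x] at this
      rw [futureSum, futureSum]
      linarith
  -- First-step analysis; `hlow` trades the reward `f x ≤ b` of the first step for one extra step
  -- from `y`, worth at least `a`.
  have key : ∀ m x, futureSum P f m x
      ≤ futureSum P f m y + (b - a) * ∑ j ∈ range m, survive P y j x := by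
    intro m
    induction m with
    | zero => intro x; simp [futureSum]
    | succ m ih =>
      intro x
      by_cases hxy : x = y
      · subst hxy; simp [survive_self]
      · have h1 : ∑ z, P x z * futureSum P f m z
            ≤ ∑ z, P x z * (futureSum P f m y
              + (b - a) * ∑ j ∈ range m, survive P y j z) :=
          Finset.sum_le_sum fun z _ => mul_le_mul_of_nonneg_left (ih z) (hP.1 x z)
        have h2 : ∑ z, P x z * (futureSum P f m y
              + (b - a) * ∑ j ∈ range m, survive P y j z)
            = futureSum P f m y + (b - a) * ∑ j ∈ range m, survive P y (j + 1) x := by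
          simp_rw [survive_succ _ hxy, mul_add, Finset.sum_add_distrib, ← Finset.sum_mul, hP.2 x,
            one_mul]
          rw [Finset.sum_comm]
          simp_rw [← Finset.mul_sum, mul_left_comm _ (b - a)]
          rw [← Finset.mul_sum]
        have h0 : survive P y 0 x = 1 := by simp only [survive, if_neg hxy]
        rw [Finset.sum_range_succ', h0]
        have h3 := hlow m y
        have h4 := (hf x).2
        have h5 : futureSum P f (m + 1) x = f x + ∑ z, P x z * futureSum P f m z := rfl
        linarith
  refine (key m x).trans ?_
  have hab : 0 ≤ b - a := by linarith [(hf x).1, (hf x).2]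
  have := mul_le_mul_of_nonneg_left (sum_survive_le_HitT hP hirr m x y) hab
  linarith

end HittingTimes

section Hoeffding

/-! ### Hoeffding's lemma on a finite set -/

open MeasureTheory ProbabilityTheory

lemma hoeffding_finite_s4 {S : Type*} [Fintype S] {p g : S → ℝ} (hp : IsProbVec p) {D : ℝ}
    (hg : ∀ x y, g x ≤ g y + D) (θ : ℝ) :
    ∑ z, p z * Real.exp (θ * (g z - ∑ w, p w * g w)) ≤ Real.exp (θ ^ 2 * D ^ 2 / 8) := by
  have : Nonempty S := by
    by_contra h
    rw [not_nonempty_iff] at h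
    simpa using hp.2
  let : MeasurableSpace S := ⊤
  have : DiscreteMeasurableSpace S := ⟨fun _ => trivial⟩
  let μ : Measure S := ∑ x, ENNReal.ofReal (p x) • Measure.dirac x
  have : IsProbabilityMeasure μ := ⟨by
    simp only [μ, Measure.coe_finsetSum, Finset.sum_apply, Measure.smul_apply, measure_univ,
      smul_eq_mul, mul_one]
    rw [← ENNReal.ofReal_sum_of_nonneg fun x _ => hp.1 x, hp.2, ENNReal.ofReal_one]⟩
  have hint : ∀ h : S → ℝ, ∫ x, h x ∂μ = ∑ x, p x * h x := fun h => by
    simp only [μ]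
    rw [integral_finsetSum_measure fun i _ => Integrable.smul_measure
      (integrable_dirac (by simp)) ENNReal.ofReal_ne_top]
    refine Finset.sum_congr rfl fun x _ => ?_
    rw [integral_smul_measure, integral_dirac, ENNReal.toReal_ofReal (hp.1 x), smul_eq_mul]
  obtain ⟨y, hy⟩ := Finite.exists_min g
  have h := (hasSubgaussianMGF_of_mem_Icc (μ := μ) (X := g) (a := g y) (b := g y + D)
    Measurable.of_discrete.aemeasurable (ae_of_all _ fun x => ⟨hy x, hg x y⟩)).mgf_le θ
  rw [mgf, hint, hint] at h
  refine h.trans (le_of_eq ?_)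
  congr 1
  push_cast
  rw [add_sub_cancel_left, Real.norm_eq_abs, div_pow, sq_abs]
  ring

end Hoeffding

section Paths

/-! ### The Markov property for sums over paths -/

variable {S : Type*} {q : S → ℝ} {P : S → S → ℝ} {n : ℕ}

/-- The conditional law of the state with index `i` given the states with smaller index: `q` for
`i = 0`, and otherwise the row of `P` at the preceding state. Indices start at `0`, so the state
with index `i` is `X_{i+1}`. -/
def nextLaw (q : S → ℝ) (P : S → S → ℝ) (ω : Fin (n + 1) → S) (i : Fin (n + 1)) : S → ℝ :=
  Fin.cases q (fun l => P (ω l.castSucc)) i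

lemma nextLaw_zero (ω : Fin (n + 1) → S) : nextLaw q P ω 0 = q := rfl

lemma nextLaw_succ (ω : Fin (n + 1) → S) (l : Fin n) :
    nextLaw q P ω l.succ = P (ω l.castSucc) := rfl

lemma nextLaw_isProbVec [Fintype S] (hP : IsStochastic P) (hq : IsProbVec q) (ω : Fin (n + 1) → S)
    (i : Fin (n + 1)) : IsProbVec (nextLaw q P ω i) := by
  cases i using Fin.cases with
  | zero => exact hq
  | succ l => exact ⟨hP.1 _, hP.2 _⟩

lemma nextLaw_congr {ω ω' : Fin (n + 1) → S} {i : Fin (n + 1)}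
    (h : ∀ l : Fin (n + 1), l.val < i.val → ω l = ω' l) :
    nextLaw q P ω i = nextLaw q P ω' i := by
  cases i using Fin.cases with
  | zero => rfl
  | succ l => rw [nextLaw_succ, nextLaw_succ, h l.castSucc (by simp)]

/-- `F ω` depends on `ω` only through its coordinates with index `< k`, that is, through
`X_1, …, X_k`. -/
def DependsOnFirst {α : Type*} (k : ℕ) (F : (Fin (n + 1) → S) → α) : Prop :=
  ∀ ω ω', (∀ l : Fin (n + 1), l.val < k → ω l = ω' l) → F ω = F ω'

lemma pathProb_snoc [Fintype S] (ω : Fin (n + 1) → S) (z : S) :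
    pathProb q P (Fin.snoc ω z : Fin (n + 2) → S) = pathProb q P ω * P (ω (Fin.last n)) z := by
  have h0 : (Fin.snoc ω z : Fin (n + 2) → S) 0 = ω 0 := Fin.snoc_castSucc (α := fun _ => S) z ω 0
  rw [pathProb, pathProb, Fin.prod_univ_castSucc, h0, mul_assoc]
  simp only [Fin.succ_castSucc, Fin.succ_last, Fin.snoc_castSucc, Fin.snoc_last]

lemma sum_path_snoc [Fintype S] (F : (Fin (n + 2) → S) → ℝ) :
    ∑ ω, F ω = ∑ ω : Fin (n + 1) → S, ∑ z, F (Fin.snoc ω z) := by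
  rw [← Fintype.sum_prod_type_right' (fun z ω => F (Fin.snoc ω z)),
    ← (Fin.snocEquiv fun _ => S).sum_comp]
  rfl

/-- The Markov property: in an expectation, the state with index `i` may be averaged against its
conditional law given the earlier states. -/
lemma sum_pathProb_eq [Fintype S] (hP : IsStochastic P) (hq : IsProbVec q) (i : Fin (n + 1))
    (K : (Fin (n + 1) → S) → S → ℝ) (hK : DependsOnFirst i.val K) :
    ∑ ω, pathProb q P ω * K ω (ω i)
      = ∑ ω, pathProb q P ω * ∑ z, nextLaw q P ω i z * K ω z := by
  induction n with
  | zero =>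
    obtain rfl : i = 0 := Fin.fin_one_eq_zero i
    -- No coordinate has index `< 0`, so `K ω` does not depend on `ω`.
    have hconst : ∀ ω ω', K ω = K ω' := fun ω ω' => hK ω ω' fun l hl => absurd hl (by simp)
    have hpp : ∀ ω : Fin 1 → S, pathProb q P ω = q (ω 0) := fun ω => by simp [pathProb]
    have hred : ∀ G : S → ℝ, ∑ ω : Fin 1 → S, G (ω 0) = ∑ z, G z := fun G =>
      (Equiv.funUnique (Fin 1) S).sum_comp G
    rcases isEmpty_or_nonempty S with hS | ⟨⟨s⟩⟩
    · simp
    have h1 : ∀ ω, K ω = K fun _ => s := fun ω => hconst _ _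
    simp_rw [hpp, nextLaw_zero, h1, ← Finset.sum_mul]
    rw [hred q, hq.2, one_mul, hred fun z => q z * K (fun _ => s) z]
  | succ n ih =>
    -- `K` ignores the last coordinate, because `i ≤ n + 1`; `ω 0` is an arbitrary filler.
    let K' : (Fin (n + 1) → S) → S → ℝ := fun ω => K (Fin.snoc ω (ω 0))
    have hK' : ∀ (ω : Fin (n + 1) → S) z, K (Fin.snoc ω z) = K' ω := fun ω z => by
      refine hK _ _ fun l hl => ?_
      cases l using Fin.lastCases with
      | last => exact absurd hl (by have := i.isLt; simp; omega)
      | cast l => simp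
    rw [sum_path_snoc, sum_path_snoc]
    simp_rw [pathProb_snoc, hK']
    cases i using Fin.lastCases with
    | last =>
      refine Finset.sum_congr rfl fun ω _ => ?_
      have hl : ∀ z, nextLaw q P (Fin.snoc ω z : Fin (n + 2) → S) (Fin.last (n + 1))
          = P (ω (Fin.last n)) := fun z => by
        rw [← Fin.succ_last, nextLaw_succ, Fin.snoc_castSucc]
      simp_rw [hl, Fin.snoc_last, ← Finset.sum_mul, mul_assoc, ← Finset.mul_sum]
      rw [hP.2, mul_one]
    | cast i =>
      have hl : ∀ ω z, nextLaw q P (Fin.snoc ω z : Fin (n + 2) → S) i.castSucc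
          = nextLaw q P ω i := fun ω z => by
        cases i using Fin.cases with
        | zero => rfl
        | succ l => rw [← Fin.succ_castSucc, nextLaw_succ, nextLaw_succ, Fin.snoc_castSucc]
      simp_rw [hl, Fin.snoc_castSucc, ← Finset.sum_mul, ← Finset.mul_sum, hP.2, mul_one]
      refine ih i K' fun ω ω' h => hK _ _ fun l hl => ?_
      cases l using Fin.lastCases with
      | last => exact absurd hl (by simp)
      | cast l => simpa using h l (by simpa using hl)

end Paths

section CondExp

/-! ### Conditional expectations -/

open MeasureTheory

variable {S : Type*} {n : ℕ}

instance {m : ℕ} : DiscreteMeasurableSpace (Fin m → S) := ⟨fun _ => trivial⟩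

lemma measurableSet_pastF_iff {k : ℕ} {A : Set (Fin (n + 1) → S)} :
    MeasurableSet[pastF S n k] A ↔ DependsOnFirst k (· ∈ A) := by
  constructor
  · rintro ⟨B, -, rfl⟩ ω ω' h
    have : (fun i : Fin (min k (n + 1)) => ω (Fin.castLE (min_le_right _ _) i))
        = fun i => ω' (Fin.castLE (min_le_right _ _) i) :=
      funext fun i => h _ (by have := i.isLt; simp; omega)
    simp only [Set.mem_preimage, this]
  · intro hA
    refine ⟨(fun ω (i : Fin (min k (n + 1))) => ω (Fin.castLE (min_le_right _ _) i)) '' A,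
      trivial, ?_⟩
    refine Set.Subset.antisymm ?_ (Set.subset_preimage_image _ _)
    rintro ω ⟨ω', hω', he⟩
    have := hA ω' ω fun l hl => congrFun he ⟨l.val, by have := l.isLt; omega⟩
    exact this.mp hω'

lemma DependsOnFirst.stronglyMeasurable {k : ℕ} {F : (Fin (n + 1) → S) → ℝ}
    (hF : DependsOnFirst k F) : StronglyMeasurable[pastF S n k] F := by
  refine Measurable.stronglyMeasurable fun s _ => ?_
  rw [measurableSet_pastF_iff]
  intro ω ω' h
  simp only [Set.mem_preimage, hF ω ω' h]

lemma pastF_mono {k l : ℕ} (h : k ≤ l) : pastF S n k ≤ pastF S n l := fun A hA => by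
  rw [measurableSet_pastF_iff] at hA ⊢
  exact fun ω ω' hω => hA ω ω' fun i hi => hω i (hi.trans_le h)

lemma pastF_le (k : ℕ) : pastF S n k ≤ pathMeasurableSpace := fun _ _ => trivial

lemma dependsOnFirst_partialSum (f : S → ℝ) (k : ℕ) :
    DependsOnFirst k fun ω : Fin (n + 1) → S =>
      ∑ l : Fin n, if l.val < k then f (ω l.castSucc) else 0 := by
  intro ω ω' h
  refine Finset.sum_congr rfl fun l _ => ?_
  split_ifs with hl
  · rw [h l.castSucc hl]
  · rfl

variable [Fintype S] {q : S → ℝ} {P : S → S → ℝ}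

instance : IsFiniteMeasure (pathMeasure q P n) := ⟨by
  simp [pathMeasure, ENNReal.sum_lt_top]⟩

lemma pathProb_nonneg (hP : IsStochastic P) (hq : IsProbVec q) (ω : Fin (n + 1) → S) :
    0 ≤ pathProb q P ω :=
  mul_nonneg (hq.1 _) (Finset.prod_nonneg fun _ _ => hP.1 _ _)

lemma integral_pathMeasure (hP : IsStochastic P) (hq : IsProbVec q)
    (F : (Fin (n + 1) → S) → ℝ) :
    ∫ ω, F ω ∂(pathMeasure q P n) = ∑ ω, pathProb q P ω * F ω := by
  rw [pathMeasure, integral_finsetSum_measure fun i _ => Integrable.smul_measure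
    (integrable_dirac (by simp)) ENNReal.ofReal_ne_top]
  refine Finset.sum_congr rfl fun ω _ => ?_
  rw [integral_smul_measure, integral_dirac, ENNReal.toReal_ofReal (pathProb_nonneg hP hq ω),
    smul_eq_mul]

/-- The Markov property in terms of conditional expectations. -/
lemma condExp_next (hP : IsStochastic P) (hq : IsProbVec q) (i : Fin (n + 1))
    (K : (Fin (n + 1) → S) → S → ℝ) (hK : DependsOnFirst i.val K) :
    (pathMeasure q P n)[(fun ω => K ω (ω i)) | pastF S n i.val]
      =ᵐ[pathMeasure q P n] fun ω => ∑ z, nextLaw q P ω i z * K ω z := by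
  symm
  refine ae_eq_condExp_of_forall_setIntegral_eq (pastF_le _) Integrable.of_finite
    (fun _ _ _ => Integrable.of_finite) (fun A hA _ => ?_)
    (DependsOnFirst.stronglyMeasurable fun ω ω' h => ?_).aestronglyMeasurable
  · rw [← integral_indicator (pastF_le _ A hA), ← integral_indicator (pastF_le _ A hA),
      integral_pathMeasure hP hq, integral_pathMeasure hP hq]
    rw [measurableSet_pastF_iff] at hA
    classical
    have := sum_pathProb_eq hP hq i (fun ω z => if ω ∈ A then K ω z else 0) fun ω ω' h => by
      have h1 : (ω ∈ A) = (ω' ∈ A) := hA ω ω' h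
      simp only [h1, hK ω ω' h]
    simp only [Set.indicator_apply]
    rw [this]
    refine Finset.sum_congr rfl fun ω _ => ?_
    split_ifs <;> simp
  · simp only [nextLaw_congr (q := q) (P := P) h, hK ω ω' h]

/-- The explicit version of `E(S_{1,n} | F_i)`: the sum of `f` over the first `i` states, plus the
expected sum over the remaining `n - i`. -/
noncomputable def doob (q : S → ℝ) (P : S → S → ℝ) (f : S → ℝ) (i : Fin (n + 1))
    (ω : Fin (n + 1) → S) : ℝ :=
  (∑ l : Fin n, if l.val < i.val then f (ω l.castSucc) else 0)
    + ∑ z, nextLaw q P ω i z * futureSum P f (n - i.val) z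

lemma doob_last (f : S → ℝ) (ω : Fin (n + 1) → S) :
    doob q P f (Fin.last n) ω = ∑ l : Fin n, f (ω l.castSucc) := by
  simp [doob, futureSum]

lemma doob_succ (f : S → ℝ) (i : Fin n) (ω : Fin (n + 1) → S) :
    doob q P f i.succ ω
      = (∑ l : Fin n, if l.val < i.val then f (ω l.castSucc) else 0)
        + futureSum P f (n - i.val) (ω i.castSucc) := by
  have hsplit : ∀ l : Fin n, (if l.val < i.val + 1 then f (ω l.castSucc) else 0)
      = (if l.val < i.val then f (ω l.castSucc) else 0)
        + if l = i then f (ω l.castSucc) else 0 := fun l => by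
    by_cases h : l = i
    · subst h; simp
    · have h' : l.val ≠ i.val := fun e => h (Fin.ext e)
      have : l.val < i.val + 1 ↔ l.val < i.val := by omega
      simp [h, this]
  obtain ⟨m, hm⟩ : ∃ m, n - i.val = m + 1 := ⟨n - i.val - 1, by have := i.isLt; omega⟩
  have hm' : n - (i.val + 1) = m := by omega
  simp only [doob, Fin.val_succ, hsplit, Finset.sum_add_distrib, hm, hm', futureSum, nextLaw_succ]
  simp [add_assoc]

lemma condExp_total (hP : IsStochastic P) (hq : IsProbVec q) (f : S → ℝ) (i : Fin (n + 1)) :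
    (pathMeasure q P n)[(fun ω => ∑ l : Fin n, f (ω l.castSucc)) | pastF S n i.val]
      =ᵐ[pathMeasure q P n] doob q P f i := by
  induction i using Fin.reverseInduction with
  | last =>
    rw [condExp_of_stronglyMeasurable (pastF_le _)
      (DependsOnFirst.stronglyMeasurable fun ω ω' h => ?_) Integrable.of_finite]
    · exact ae_of_all _ fun ω => (doob_last f ω).symm
    · exact Finset.sum_congr rfl fun l _ => by rw [h l.castSucc (by simp)]
  | cast i ih =>
    have h1 := condExp_next hP hq i.castSucc
      (fun ω z => (∑ l : Fin n, if l.val < i.val then f (ω l.castSucc) else 0)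
        + futureSum P f (n - i.val) z)
      fun ω ω' h => by
        funext z
        exact congrArg (· + _) (dependsOnFirst_partialSum f i.val ω ω' h)
    have h2 : doob q P f i.succ = fun ω => (∑ l : Fin n, if l.val < i.val then f (ω l.castSucc)
        else 0) + futureSum P f (n - i.val) (ω i.castSucc) := funext (doob_succ f i)
    refine (condExp_condExp_of_le (pastF_mono (Fin.castSucc_lt_succ (i := i)).le)
      (pastF_le _)).symm.trans ((condExp_congr_ae ih).trans ?_)
    rw [h2]
    refine h1.trans (ae_of_all _ fun ω => ?_)
    simp only [mul_add, Finset.sum_add_distrib, ← Finset.sum_mul,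
      (nextLaw_isProbVec hP hq ω i.castSucc).2, one_mul, doob, Fin.val_castSucc]

end CondExp

end MC

open MC MeasureTheory in
/-- **Sub-Gaussian bound for the Doob martingale differences** (key step of Theorem 1).
Let `S_{1,n} = ∑_{k=1}^n f(X_k)`, `F_k = σ(X_1, …, X_k)`, and
`Δ_k = E(S_{1,n} | F_k) − E(S_{1,n} | F_{k−1})`. Then for `1 ≤ k ≤ n` and all `θ ∈ ℝ`,
`E(e^{θΔ_k} | F_{k−1}) ≤ exp(θ²(b−a)²HitT(P)²/8)` almost surely. -/
theorem doob_martingale_difference_mgf_bound {S : Type*} [Fintype S] [DecidableEq S]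
    (P : S → S → ℝ) (hP : IsStochastic P) (hirr : IsIrreducible P)
    (q : S → ℝ) (hq : IsProbVec q)
    (f : S → ℝ) (a b : ℝ) (hf : ∀ x, f x ∈ Set.Icc a b)
    (n k : ℕ) (hk1 : 1 ≤ k) (hk2 : k ≤ n) (θ : ℝ) :
    ∀ᵐ ω ∂(pathMeasure q P n),
      ((pathMeasure q P n)[(fun ω' => Real.exp (θ *
          (((pathMeasure q P n)[(fun ω'' => ∑ i : Fin n, f (ω'' i.castSucc)) | pastF S n k]) ω' -
           ((pathMeasure q P n)[(fun ω'' => ∑ i : Fin n, f (ω'' i.castSucc)) | pastF S n (k - 1)]) ω'))) |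
        pastF S n (k - 1)]) ω ≤
      Real.exp (θ ^ 2 * (b - a) ^ 2 * HitT P ^ 2 / 8) := by
  obtain ⟨i, rfl⟩ : ∃ i : Fin n, k = i.val + 1 := ⟨⟨k - 1, by omega⟩, by simp; omega⟩
  rw [Nat.add_sub_cancel]
  have h1 := condExp_total hP hq f i.succ
  have h0 := condExp_total hP hq f i.castSucc
  rw [Fin.val_succ] at h1
  rw [Fin.val_castSucc] at h0
  let g := futureSum P f (n - i.val)
  let K : (Fin (n + 1) → S) → S → ℝ := fun ω z =>
    Real.exp (θ * (g z - ∑ w, nextLaw q P ω i.castSucc w * g w))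
  have hK : DependsOnFirst i.castSucc.val K := fun ω ω' h => by
    simp only [K, nextLaw_congr (q := q) (P := P) h]
  have hΔ : (fun ω' => Real.exp (θ *
      (((pathMeasure q P n)[(fun ω'' => ∑ i : Fin n, f (ω'' i.castSucc)) | pastF S n (i.val + 1)]) ω'
        - ((pathMeasure q P n)[(fun ω'' => ∑ i : Fin n, f (ω'' i.castSucc)) | pastF S n i.val]) ω')))
      =ᵐ[pathMeasure q P n] fun ω => K ω (ω i.castSucc) := by
    filter_upwards [h1, h0] with ω e1 e0
    rw [e1, e0, doob_succ, doob, Fin.val_castSucc, add_sub_add_left_eq_sub]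
  filter_upwards [(condExp_congr_ae hΔ).trans (condExp_next hP hq i.castSucc K hK)] with ω hω
  rw [Fin.val_castSucc] at hω
  rw [hω, mul_assoc, ← mul_pow]
  exact hoeffding_finite_s4 (nextLaw_isProbVec hP hq ω i.castSucc)
    (futureSum_osc hP hirr hf (n - i.val)) θ
end
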